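/- Let j, k ∈ {0,1} and let b, c, e, f be integers, set d := 1 + 2bc, and let G be the group with presentation on generators α₁, β₁, α₂, β₂, m and relations α₁⁻¹mα₁ = m⁻¹, α₂⁻¹mα₂ = m⁻¹, β₁m = mβ₁, β₂m = mβ₂, α₁β₁α₁⁻¹β₁⁻¹ = m^j, α₂β₂α₂⁻¹β₂⁻¹ = m^k, α₁² = α₂²β₂^{2c}m^e, β₁ = α₂^{2b}β₂^{d}m^f. Set γ := α₁⁻¹α₂β₂^{c} in G. Then the following relations hold in G: m·γ = γ·m; α₁β₂α₁⁻¹β₂⁻¹ = m^{j+2(f−be)}; α₁⁻¹γα₁ = m^{kc−e}·γ⁻¹; and β₂⁻¹γβ₂ = m^{j−k+2(f−be)}·γ. -/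

import Mathlib

/-- Generators `α₁`, `β₁`, `α₂`, `β₂`, `m` of the glued group `G`. -/
inductive GlueGen : Type
  | a1 : GlueGen  -- α₁
  | b1 : GlueGen  -- β₁
  | a2 : GlueGen  -- α₂
  | b2 : GlueGen  -- β₂
  | m : GlueGen   -- m

open FreeGroup in
/-- The relators of the presentation (c-even) of the paper, with `d = 1 + 2bc`:
`α₁⁻¹mα₁ = m⁻¹`, `α₂⁻¹mα₂ = m⁻¹`, `β₁m = mβ₁`, `β₂m = mβ₂`, `α₁β₁α₁⁻¹β₁⁻¹ = m^j`,
`α₂β₂α₂⁻¹β₂⁻¹ = m^k`, `α₁² = α₂²β₂^{2c}m^e`, `β₁ = α₂^{2b}β₂^{d}m^f`. -/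
def cEvenRels (j k b c e f : ℤ) : Set (FreeGroup GlueGen) :=
  { (of GlueGen.a1)⁻¹ * of GlueGen.m * of GlueGen.a1 * of GlueGen.m,
    (of GlueGen.a2)⁻¹ * of GlueGen.m * of GlueGen.a2 * of GlueGen.m,
    of GlueGen.b1 * of GlueGen.m * (of GlueGen.b1)⁻¹ * (of GlueGen.m)⁻¹,
    of GlueGen.b2 * of GlueGen.m * (of GlueGen.b2)⁻¹ * (of GlueGen.m)⁻¹,
    of GlueGen.a1 * of GlueGen.b1 * (of GlueGen.a1)⁻¹ * (of GlueGen.b1)⁻¹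
      * (of GlueGen.m) ^ (-j),
    of GlueGen.a2 * of GlueGen.b2 * (of GlueGen.a2)⁻¹ * (of GlueGen.b2)⁻¹
      * (of GlueGen.m) ^ (-k),
    (of GlueGen.a1) ^ 2
      * ((of GlueGen.a2) ^ 2 * (of GlueGen.b2) ^ (2 * c) * (of GlueGen.m) ^ e)⁻¹,
    of GlueGen.b1
      * ((of GlueGen.a2) ^ (2 * b) * (of GlueGen.b2) ^ (1 + 2 * b * c)
          * (of GlueGen.m) ^ f)⁻¹ }

section GlueRelations

variable {G : Type*} [Group G] {a a₁ a₂ b₁ b₂ m : G}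

/-- If conjugation by `a` inverts `m`, then `a` moves past powers of `m` by inverting them. -/
theorem mul_zpow_of_semiconjBy_inv (h : SemiconjBy a m m⁻¹) (n : ℤ) :
    a * m ^ n = m ^ (-n) * a := by
  simpa using (h.zpow_right n).eq

theorem commute_sq_of_semiconjBy_inv (h : SemiconjBy a m m⁻¹) : Commute (a ^ 2) m := by
  rw [pow_two]
  exact SemiconjBy.mul_left (by simpa using h.inv_right) h

/-- If `a b a⁻¹ = mᵏ b`, where `a` inverts `m` and `b` centralizes it, then `a²` commutes
with `b`. -/
theorem commute_sq_of_semiconjBy_zpow_mul {b : G} {k : ℤ} (h : SemiconjBy a m m⁻¹)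
    (hab : SemiconjBy a b (m ^ k * b)) : Commute (a ^ 2) b := by
  have h' : SemiconjBy a (m ^ k * b) b := by
    simpa using (h.zpow_right k).mul_right hab
  rw [pow_two]
  exact h'.mul_left hab

/-- The second gluing relation, rewritten in terms of `a₁` instead of `a₂`. -/
theorem glue_eq_zpow_mul {b c e f : ℤ}
    (ha₂m : SemiconjBy a₂ m m⁻¹) (hbm : Commute b₂ m) (hxb : Commute (a₂ ^ 2) b₂)
    (hsq : a₁ ^ 2 = a₂ ^ 2 * b₂ ^ (2 * c) * m ^ e)
    (hb₁ : b₁ = a₂ ^ (2 * b) * b₂ ^ (1 + 2 * b * c) * m ^ f) :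
    b₁ = (a₁ ^ 2) ^ b * b₂ * m ^ (f - b * e) := by
  have hxm := commute_sq_of_semiconjBy_inv ha₂m
  have hpow : (a₁ ^ 2) ^ b = a₂ ^ (2 * b) * b₂ ^ (2 * b * c) * m ^ (b * e) := by
    rw [hsq, ((hxm.zpow_right e).mul_left (hbm.zpow_zpow _ _)).mul_zpow,
      (hxb.zpow_right _).mul_zpow, ← zpow_mul, ← zpow_mul, mul_right_comm 2 c b,
      mul_comm e b, zpow_mul a₂ 2 b, zpow_ofNat]
  have hmb : m ^ (b * e) * b₂ = b₂ * m ^ (b * e) := (hbm.zpow_right _).eq.symm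
  rw [hpow, hb₁, mul_assoc (_ * _) (m ^ (b * e)), hmb, add_comm 1, zpow_add_one, sub_eq_neg_add,
    zpow_add, zpow_neg]
  group

/-- The action of `a₁` on `b₂`, deduced from its action on `b₁`. -/
theorem semiconjBy_of_glue {j b s : ℤ}
    (ha₁m : SemiconjBy a₁ m m⁻¹) (hbm : Commute b₂ m)
    (hab₁ : SemiconjBy a₁ b₁ (m ^ j * b₁)) (hb₁ : b₁ = (a₁ ^ 2) ^ b * b₂ * m ^ s) :
    SemiconjBy a₁ b₂ (m ^ (j + 2 * s) * b₂) := by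
  have hym (n : ℤ) : Commute ((a₁ ^ 2) ^ b) (m ^ n) :=
    (commute_sq_of_semiconjBy_inv ha₁m).zpow_zpow b n
  have hb₂ : b₂ = ((a₁ ^ 2) ^ b)⁻¹ * b₁ * m ^ (-s) := by
    rw [hb₁]; group
  have haa : SemiconjBy a₁ ((a₁ ^ 2) ^ b)⁻¹ ((a₁ ^ 2) ^ b)⁻¹ :=
    (((Commute.refl a₁).pow_right 2).zpow_right b).inv_right
  have hm : SemiconjBy a₁ (m ^ (-s)) (m ^ s) := by
    simpa using ha₁m.zpow_right (-s)
  have key := (haa.mul_right hab₁).mul_right hm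
  rw [← hb₂] at key
  suffices h : m ^ (j + 2 * s) * b₂ = ((a₁ ^ 2) ^ b)⁻¹ * (m ^ j * b₁) * m ^ s by rwa [h]
  have hbs : b₂ * m ^ s = m ^ s * b₂ := (hbm.zpow_right s).eq
  calc m ^ (j + 2 * s) * b₂ = m ^ j * (m ^ s * (m ^ s * b₂)) := by
        rw [two_mul, zpow_add, zpow_add]; group
    _ = m ^ j * (b₂ * m ^ s * m ^ s) := by rw [← hbs, ← mul_assoc (m ^ s), ← hbs]
    _ = ((a₁ ^ 2) ^ b)⁻¹ * ((a₁ ^ 2) ^ b * m ^ j) * (b₂ * m ^ s * m ^ s) := by group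
    _ = ((a₁ ^ 2) ^ b)⁻¹ * (m ^ j * b₁) * m ^ s := by
        rw [(hym j).eq, hb₁]; simp only [mul_assoc]

/-- `γ = a₁⁻¹ a₂ b₂ᶜ` commutes with `m`. -/
theorem commute_gamma (ha₁m : SemiconjBy a₁ m m⁻¹) (ha₂m : SemiconjBy a₂ m m⁻¹)
    (hbm : Commute b₂ m) (c : ℤ) : Commute m (a₁⁻¹ * a₂ * b₂ ^ c) :=
  Commute.symm ((ha₁m.inv_symm_left.mul_left ha₂m).mul_left (hbm.zpow_left c))

/-- Conjugation by `a₁` inverts `γ = a₁⁻¹ a₂ b₂ᶜ` up to a power of `m`. -/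
theorem conj_gamma {k c e : ℤ}
    (ha₁m : SemiconjBy a₁ m m⁻¹) (ha₂m : SemiconjBy a₂ m m⁻¹) (hbm : Commute b₂ m)
    (hab₂ : SemiconjBy a₂ b₂ (m ^ k * b₂))
    (hsq : a₁ ^ 2 = a₂ ^ 2 * b₂ ^ (2 * c) * m ^ e) :
    a₁⁻¹ * (a₁⁻¹ * a₂ * b₂ ^ c) * a₁ = m ^ (k * c - e) * (a₁⁻¹ * a₂ * b₂ ^ c)⁻¹ := by
  have hbc : a₂ * b₂ ^ c = m ^ (k * c) * b₂ ^ c * a₂ := by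
    rw [(hab₂.zpow_right c).eq, (hbm.symm.zpow_left k).mul_zpow, ← zpow_mul]
  have hsquare : a₂ * b₂ ^ c * (a₂ * b₂ ^ c) = a₁ ^ 2 * m ^ (k * c - e) := by
    have hca : b₂ ^ c * a₂ = a₂ * m ^ (k * c) * b₂ ^ c := by
      rw [mul_zpow_of_semiconjBy_inv ha₂m, mul_assoc, hbc, zpow_neg]; group
    have hmb : m ^ (k * c) * b₂ ^ (2 * c) = b₂ ^ (2 * c) * m ^ (k * c) :=
      (hbm.zpow_zpow _ _).eq.symm
    calc a₂ * b₂ ^ c * (a₂ * b₂ ^ c) = a₂ * (b₂ ^ c * a₂) * b₂ ^ c := by group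
      _ = a₂ ^ 2 * (m ^ (k * c) * b₂ ^ (2 * c)) := by
        rw [hca, two_mul, zpow_add, pow_two]; simp only [mul_assoc]
      _ = a₁ ^ 2 * m ^ (k * c - e) := by
        rw [hmb, hsq, sub_eq_neg_add, zpow_add, zpow_neg]; group
  have hym : a₁ ^ 2 * m ^ (k * c - e) = m ^ (k * c - e) * a₁ ^ 2 :=
    ((commute_sq_of_semiconjBy_inv ha₁m).zpow_right _).eq
  rw [eq_mul_inv_iff_mul_eq]
  calc a₁⁻¹ * (a₁⁻¹ * a₂ * b₂ ^ c) * a₁ * (a₁⁻¹ * a₂ * b₂ ^ c)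
      = (a₁ ^ 2)⁻¹ * (a₂ * b₂ ^ c * (a₂ * b₂ ^ c)) := by rw [pow_two]; group
    _ = m ^ (k * c - e) := by rw [hsquare, inv_mul_cancel_left]

/-- Conjugation by `b₂` fixes `γ = a₁⁻¹ a₂ b₂ᶜ` up to a power of `m`. -/
theorem conj_gamma_by_base {k t : ℤ}
    (ha₁m : SemiconjBy a₁ m m⁻¹) (hbm : Commute b₂ m)
    (hab₁ : SemiconjBy a₁ b₂ (m ^ t * b₂)) (hab₂ : SemiconjBy a₂ b₂ (m ^ k * b₂)) (c : ℤ) :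
    b₂⁻¹ * (a₁⁻¹ * a₂ * b₂ ^ c) * b₂ = m ^ (t - k) * (a₁⁻¹ * a₂ * b₂ ^ c) := by
  have hinv : SemiconjBy a₁⁻¹ (m ^ k * b₂) (m ^ (t - k) * b₂) := by
    refine SemiconjBy.inv_symm_left ?_
    have h := (ha₁m.zpow_right (t - k)).mul_right hab₁
    rwa [inv_zpow', ← mul_assoc, ← zpow_add, neg_sub, sub_add_cancel] at h
  have h : SemiconjBy (a₁⁻¹ * a₂ * b₂ ^ c) b₂ (m ^ (t - k) * b₂) :=
    (hinv.mul_left hab₂).mul_left ((Commute.refl b₂).zpow_left c)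
  rw [mul_assoc, h.eq, (hbm.symm.zpow_left _).eq, mul_assoc, inv_mul_cancel_left]

end GlueRelations

/-- The derived relations satisfied by `γ := α₁⁻¹α₂β₂^c` in the group (c-even) of the
paper: `mγ = γm`, `α₁β₂α₁⁻¹β₂⁻¹ = m^{j+2(f−be)}`, `α₁⁻¹γα₁ = m^{kc−e}γ⁻¹`, and
`β₂⁻¹γβ₂ = m^{j−k+2(f−be)}γ`. -/
theorem cEven_gamma_relations (j k b c e f : ℤ)
    (hj : j = 0 ∨ j = 1) (hk : k = 0 ∨ k = 1) :
    let G := PresentedGroup (cEvenRels j k b c e f)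
    let a1 : G := PresentedGroup.of GlueGen.a1
    let a2 : G := PresentedGroup.of GlueGen.a2
    let b2 : G := PresentedGroup.of GlueGen.b2
    let m : G := PresentedGroup.of GlueGen.m
    let γ : G := a1⁻¹ * a2 * b2 ^ c
    m * γ = γ * m ∧
    a1 * b2 * a1⁻¹ * b2⁻¹ = m ^ (j + 2 * (f - b * e)) ∧
    a1⁻¹ * γ * a1 = m ^ (k * c - e) * γ⁻¹ ∧
    b2⁻¹ * γ * b2 = m ^ (j - k + 2 * (f - b * e)) * γ := by
  intro G a1 a2 b2 m γ
  let b1 : G := PresentedGroup.of GlueGen.b1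
  have rel {r : FreeGroup GlueGen} (hr : r ∈ cEvenRels j k b c e f) :
      PresentedGroup.mk (cEvenRels j k b c e f) r = 1 := PresentedGroup.one_of_mem hr
  have hm₁ : a1⁻¹ * m * a1 * m = 1 := rel (by simp [cEvenRels])
  have hm₂ : a2⁻¹ * m * a2 * m = 1 := rel (by simp [cEvenRels])
  have hbm : b2 * m * b2⁻¹ * m⁻¹ = 1 := rel (by simp [cEvenRels])
  have hj₁ : a1 * b1 * a1⁻¹ * b1⁻¹ * m ^ (-j) = 1 := rel (by simp [cEvenRels])
  have hk₂ : a2 * b2 * a2⁻¹ * b2⁻¹ * m ^ (-k) = 1 := rel (by simp [cEvenRels])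
  have hsq : a1 ^ 2 * (a2 ^ 2 * b2 ^ (2 * c) * m ^ e)⁻¹ = 1 := rel (by simp [cEvenRels])
  have hb₁ : b1 * (a2 ^ (2 * b) * b2 ^ (1 + 2 * b * c) * m ^ f)⁻¹ = 1 :=
    rel (by simp [cEvenRels])
  have inverts {x : G} (h : x⁻¹ * m * x * m = 1) : SemiconjBy x m m⁻¹ := by
    have hconj : x⁻¹ * m * x = m⁻¹ := eq_inv_of_mul_eq_one_left h
    have hx : SemiconjBy x m⁻¹ m := by rw [SemiconjBy, ← hconj]; group
    rw [← SemiconjBy.inv_right_iff, inv_inv]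
    exact hx
  have semiconj {x y : G} {n : ℤ} (h : x * y * x⁻¹ * y⁻¹ * m ^ (-n) = 1) :
      SemiconjBy x y (m ^ n * y) := by
    rw [zpow_neg, mul_inv_eq_one] at h
    rw [SemiconjBy, ← h]; group
  have ha₁m := inverts hm₁
  have ha₂m := inverts hm₂
  have hbm : Commute b2 m := commutatorElement_eq_one_iff_commute.mp hbm
  have hab₂ := semiconj hk₂
  rw [mul_inv_eq_one] at hsq hb₁
  have hab₁ := semiconjBy_of_glue ha₁m hbm (semiconj hj₁)
    (glue_eq_zpow_mul ha₂m hbm (commute_sq_of_semiconjBy_zpow_mul ha₂m hab₂) hsq hb₁)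
  refine ⟨commute_gamma ha₁m ha₂m hbm c, ?_, conj_gamma ha₁m ha₂m hbm hab₂ hsq, ?_⟩
  · rw [hab₁.eq]; group
  · rw [sub_add_eq_add_sub]
    exact conj_gamma_by_base ha₁m hbm hab₁ hab₂ c
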